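/- arXiv:2605.02043 — 3 statements merged into one kernel-verified Lean document; each statement's English description precedes it below -/
import Mathlib

section
/- Let f : ℝ^d → ℝ be differentiable with L-Lipschitz gradient (L > 0), let 0 < η ≤ 1/(2L), and let x, m ∈ ℝ^d. Then f(x − η m) ≤ f(x) − (η/4)‖m‖² + (η/2)‖m − ∇f(x)‖². -/
/-! The descent inequality for a function with `L`-Lipschitz gradient, applied at `y = x - η m`,
gives `f (x - η m) ≤ f x - η ⟪∇f x, m⟫ + (L η² / 2) ‖m‖²`. Since `L η ≤ 1/2`, the last term is at
most `(η / 4) ‖m‖²`, and the polarization identity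
`-η ⟪∇f x, m⟫ = (η / 2) ‖m - ∇f x‖² - (η / 2) ‖m‖² - (η / 2) ‖∇f x‖²` finishes the proof. -/

/-- The descent inequality. It holds because `t ↦ f (x + t v) - t ⟪∇f x, v⟫ - (L / 2) t² ‖v‖²` has
derivative `⟪∇f (x + t v) - ∇f x, v⟫ - L t ‖v‖² ≤ 0` for `t ≥ 0`. -/
theorem descent_inequality
    {d : ℕ} (f : EuclideanSpace ℝ (Fin d) → ℝ) (L : ℝ)
    (hdiff : Differentiable ℝ f)
    (hsmooth : ∀ x y : EuclideanSpace ℝ (Fin d),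
      ‖gradient f x - gradient f y‖ ≤ L * ‖x - y‖)
    (x v : EuclideanSpace ℝ (Fin d)) :
    f (x + v) ≤ f x + inner ℝ (gradient f x) v + L / 2 * ‖v‖ ^ 2 := by
  have hderiv : ∀ t : ℝ, HasDerivAt
      (fun t : ℝ => f (x + t • v) - t * inner ℝ (gradient f x) v - L / 2 * ‖v‖ ^ 2 * t ^ 2)
      (inner ℝ (gradient f (x + t • v)) v - inner ℝ (gradient f x) v - L * ‖v‖ ^ 2 * t) t := by
    intro t
    have hline : HasDerivAt (fun t : ℝ => x + t • v) v t := by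
      simpa using ((hasDerivAt_id t).smul_const v).const_add x
    have hf : HasDerivAt (fun t : ℝ => f (x + t • v))
        (inner ℝ (gradient f (x + t • v)) v) t := by
      have h := (hdiff (x + t • v)).hasGradientAt.hasFDerivAt.comp_hasDerivAt t hline
      simpa [Function.comp_def] using h
    have hlin := (hasDerivAt_id t).mul_const (inner ℝ (gradient f x) v)
    have hquad := ((hasDerivAt_id t).pow 2).const_mul (L / 2 * ‖v‖ ^ 2)
    refine ((hf.sub hlin).sub hquad).congr_deriv ?_
    simp
    ring
  have hanti : AntitoneOn
      (fun t : ℝ => f (x + t • v) - t * inner ℝ (gradient f x) v - L / 2 * ‖v‖ ^ 2 * t ^ 2)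
      (Set.Icc 0 1) := by
    refine antitoneOn_of_deriv_nonpos (convex_Icc 0 1)
      (fun t _ => (hderiv t).continuousAt.continuousWithinAt)
      (fun t _ => (hderiv t).differentiableAt.differentiableWithinAt) ?_
    intro t ht
    rw [interior_Icc] at ht
    rw [(hderiv t).deriv, ← inner_sub_left]
    have hcs := real_inner_le_norm (gradient f (x + t • v) - gradient f x) v
    have hlip := hsmooth (x + t • v) x
    rw [add_sub_cancel_left, norm_smul, Real.norm_of_nonneg ht.1.le] at hlip
    have hmul := mul_le_mul_of_nonneg_right hlip (norm_nonneg v)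
    linarith
  have h := hanti (Set.left_mem_Icc.2 zero_le_one) (Set.right_mem_Icc.2 zero_le_one) zero_le_one
  simp only [one_smul, zero_smul, add_zero] at h
  linarith

/-- For `f` differentiable with `L`-Lipschitz gradient, `0 < η ≤ 1/(2L)`,
and any `x, m`: `f(x − η m) ≤ f(x) − (η/4)‖m‖² + (η/2)‖m − ∇f(x)‖²`. -/
theorem descent_step_momentum_bound
    {d : ℕ} (f : EuclideanSpace ℝ (Fin d) → ℝ) (L : ℝ) (hL : 0 < L)
    (hdiff : Differentiable ℝ f)
    (hsmooth : ∀ x y : EuclideanSpace ℝ (Fin d),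
      ‖gradient f x - gradient f y‖ ≤ L * ‖x - y‖)
    (η : ℝ) (hη : 0 < η) (hη' : η ≤ 1 / (2 * L))
    (x m : EuclideanSpace ℝ (Fin d)) :
    f (x - η • m) ≤ f x - (η / 4) * ‖m‖ ^ 2 + (η / 2) * ‖m - gradient f x‖ ^ 2 := by
  have h := descent_inequality f L hdiff hsmooth x (-(η • m))
  rw [← sub_eq_add_neg, inner_neg_right, real_inner_smul_right, norm_neg, norm_smul,
    Real.norm_of_nonneg hη.le] at h
  rw [norm_sub_sq_real, real_inner_comm]
  have hstep : η * (2 * L) ≤ 1 := (le_div_iff₀ (by positivity)).1 hη'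
  have hquad := mul_le_mul_of_nonneg_right hstep (by positivity : 0 ≤ η * ‖m‖ ^ 2)
  have hgrad : 0 ≤ η * ‖gradient f x‖ ^ 2 := by positivity
  linarith
end

section
/- (One-step recursion for the expected momentum error.) Let f : ℝ^d → ℝ be differentiable with L-Lipschitz gradient (L > 0), let β ∈ (0,1), η > 0, and let x, m, ē ∈ ℝ^d. Set x' := x − η m and ē' := (1−β)(ē + ∇f(x) − ∇f(x')). Then ‖ē'‖² ≤ (1−β)‖ē‖² + (L²η²/β)‖m‖². -/
/-!
The step moves `x` by `η • m`, so the gradient changes by at most `L * η * ‖m‖`. Young's inequality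
with weight `p = 1 - β` splits the squared norm of `ebar` plus this change; multiplying by
`(1 - β) ^ 2` turns the coefficient `1 / (1 - β)` of `‖ebar‖ ^ 2` into `1 - β`, and the
coefficient `1 / β` of the other term can only decrease, since `(1 - β) ^ 2 ≤ 1`.
-/

/-- Young's inequality with weights `1 - β` and `β`. The gap between the two sides is
`(β * a - (1 - β) * c) ^ 2 / (β * (1 - β))`. -/
theorem sq_add_le_young (a c β : ℝ) (h0 : 0 < β) (h1 : β < 1) :
    (a + c) ^ 2 ≤ a ^ 2 / (1 - β) + c ^ 2 / β := by
  have h1' : 0 < 1 - β := sub_pos.mpr h1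
  have key : a ^ 2 / (1 - β) + c ^ 2 / β - (a + c) ^ 2
      = (β * a - (1 - β) * c) ^ 2 / (β * (1 - β)) := by
    field_simp
    ring
  have : 0 ≤ (β * a - (1 - β) * c) ^ 2 / (β * (1 - β)) := by positivity
  linarith

/-- **One-step recursion for the expected momentum error.** For `f`
differentiable with `L`-Lipschitz gradient, `β ∈ (0,1)`, `η > 0`, `x' := x − η m` and
`ē' := (1−β)(ē + ∇f(x) − ∇f(x'))`, we have `‖ē'‖² ≤ (1−β)‖ē‖² + (L²η²/β)‖m‖²`. -/
theorem expected_momentum_error_one_step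
    {d : ℕ} (f : EuclideanSpace ℝ (Fin d) → ℝ) (L : ℝ) (hL : 0 < L)
    (hdiff : Differentiable ℝ f)
    (hsmooth : ∀ x y : EuclideanSpace ℝ (Fin d),
      ‖gradient f x - gradient f y‖ ≤ L * ‖x - y‖)
    (β η : ℝ) (hβ0 : 0 < β) (hβ1 : β < 1) (hη : 0 < η)
    (x m ebar : EuclideanSpace ℝ (Fin d)) :
    ‖(1 - β) • (ebar + gradient f x - gradient f (x - η • m))‖ ^ 2 ≤
      (1 - β) * ‖ebar‖ ^ 2 + (L ^ 2 * η ^ 2 / β) * ‖m‖ ^ 2 := by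
  have h1 : 0 < 1 - β := sub_pos.mpr hβ1
  have hgrad : ‖gradient f x - gradient f (x - η • m)‖ ≤ L * η * ‖m‖ := by
    have h := hsmooth x (x - η • m)
    rwa [sub_sub_cancel, norm_smul, Real.norm_of_nonneg hη.le, ← mul_assoc] at h
  have htri : ‖ebar + gradient f x - gradient f (x - η • m)‖ ≤ ‖ebar‖ + L * η * ‖m‖ := by
    rw [add_sub_assoc]
    exact (norm_add_le _ _).trans (by gcongr)
  rw [norm_smul, Real.norm_of_nonneg h1.le, mul_pow]
  calc (1 - β) ^ 2 * ‖ebar + gradient f x - gradient f (x - η • m)‖ ^ 2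
      ≤ (1 - β) ^ 2 * (‖ebar‖ + L * η * ‖m‖) ^ 2 := by gcongr
    _ ≤ (1 - β) ^ 2 * (‖ebar‖ ^ 2 / (1 - β) + (L * η * ‖m‖) ^ 2 / β) := by
        gcongr
        exact sq_add_le_young _ _ _ hβ0 hβ1
    _ = (1 - β) * ‖ebar‖ ^ 2 + (1 - β) ^ 2 * ((L ^ 2 * η ^ 2 / β) * ‖m‖ ^ 2) := by
        field_simp
    _ ≤ (1 - β) * ‖ebar‖ ^ 2 + (L ^ 2 * η ^ 2 / β) * ‖m‖ ^ 2 := by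
        refine add_le_add le_rfl ?_
        exact mul_le_of_le_one_left (by positivity) (pow_le_one₀ h1.le (by linarith))
end

section
/- (Arithmetic core and tuning of the nonconvex rate, Theorem on nonconvex smooth objectives.) Let L, Δ, σ, T > 0, β ∈ (0,1), and set η := β/(2√2·L). Suppose nonnegative reals G, E, Ê, Q satisfy: (i) E ≤ 2Ê + G/4; (ii) Ê ≤ 2LΔ/(βT) + βσ² + (L²η²/β²)·Q; (iii) Q ≤ 4Δ/(ηT) + 2E; (iv) G ≤ 2Δ/(ηT) + E. Then G ≤ 40LΔ/(βT) + 8βσ². Moreover, if M ≥ 2 is an integer and β = min{1/(16(M−1)), √(5LΔ)/(σ√T)}, then G ≤ 640LΔ(M−1)/T + 16√5·σ√(LΔ)/√T. -/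
/-!
Write `A = LΔ/(βT)` and `B = βσ²`. The choice of `η` makes `L²η²/β² = 1/8` and `Δ/(ηT) = 2√2 A`, so
the four hypotheses become linear in `G, E, Ê, Q, A, B`. Eliminating `Q`, `Ê` and `E` gives
`G ≤ (16 + 16√2) A + 8 B`, and `√2 ≤ 3/2` bounds the first coefficient by `40`.

For the tuned `β = min a b`, the term increasing in `β` is bounded using `β ≤ b`, and the
term in `1/β` using `1/β ≤ 1/a + 1/b`; the two contributions of `b` are equal, each being
`8√5 σ√(LΔ)/√T`.
-/

/-- **Arithmetic core and tuning of the nonconvex rate.** With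
`η = β/(2√2 L)` and nonnegative reals `G, E, Ê, Q` satisfying the four lemma inequalities,
we get `G ≤ 40LΔ/(βT) + 8βσ²`; moreover, if `M ≥ 2` and
`β = min{1/(16(M−1)), √(5LΔ)/(σ√T)}` then
`G ≤ 640LΔ(M−1)/T + 16√5 σ√(LΔ)/√T`. -/
theorem nonconvex_rate_arithmetic_core
    (L Δ σ T : ℝ) (hL : 0 < L) (hΔ : 0 < Δ) (hσ : 0 < σ) (hT : 0 < T)
    (β η : ℝ) (hβ0 : 0 < β) (hβ1 : β < 1)
    (hη : η = β / (2 * Real.sqrt 2 * L))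
    (G E Ehat Q : ℝ) (hG : 0 ≤ G) (hE : 0 ≤ E) (hEhat : 0 ≤ Ehat) (hQ : 0 ≤ Q)
    (h1 : E ≤ 2 * Ehat + G / 4)
    (h2 : Ehat ≤ 2 * L * Δ / (β * T) + β * σ ^ 2 + (L ^ 2 * η ^ 2 / β ^ 2) * Q)
    (h3 : Q ≤ 4 * Δ / (η * T) + 2 * E)
    (h4 : G ≤ 2 * Δ / (η * T) + E) :
    G ≤ 40 * L * Δ / (β * T) + 8 * β * σ ^ 2 ∧
      ∀ M : ℕ, 2 ≤ M →
        β = min (1 / (16 * ((M : ℝ) - 1))) (Real.sqrt (5 * L * Δ) / (σ * Real.sqrt T)) →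
        G ≤ 640 * L * Δ * ((M : ℝ) - 1) / T +
          16 * Real.sqrt 5 * σ * Real.sqrt (L * Δ) / Real.sqrt T := by
  have hfirst : G ≤ 40 * L * Δ / (β * T) + 8 * β * σ ^ 2 := by
    have hr : 0 < √(2 : ℝ) := by positivity
    have hr2 : √(2 : ℝ) ^ 2 = 2 := Real.sq_sqrt (by norm_num)
    have hr3 : √(2 : ℝ) ≤ 3 / 2 := by nlinarith
    have hc : L ^ 2 * η ^ 2 / β ^ 2 = 1 / 8 := by
      rw [hη]
      field_simp
      rw [hr2]
      norm_num
    have hd : Δ / (η * T) = 2 * √2 * (L * Δ / (β * T)) := by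
      rw [hη]
      field_simp
    have hA : 0 < L * Δ / (β * T) := by positivity
    have e1 : 2 * L * Δ / (β * T) = 2 * (L * Δ / (β * T)) := by ring
    have e2 : 4 * Δ / (η * T) = 4 * (Δ / (η * T)) := by ring
    have e3 : 2 * Δ / (η * T) = 2 * (Δ / (η * T)) := by ring
    have e4 : 40 * L * Δ / (β * T) = 40 * (L * Δ / (β * T)) := by ring
    rw [hc, e1] at h2
    rw [e2, hd] at h3
    rw [e3, hd] at h4
    rw [e4]
    have hm := mul_le_mul_of_nonneg_right hr3 hA.le
    linarith
  refine ⟨hfirst, fun M hM hβ => ?_⟩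
  have hM' : (0 : ℝ) < (M : ℝ) - 1 := by
    have : (2 : ℝ) ≤ M := by exact_mod_cast hM
    linarith
  have hs5 : √(5 * L * Δ) = √5 * √(L * Δ) := by
    rw [mul_assoc, Real.sqrt_mul (by norm_num)]
  rw [hs5] at hβ
  have hr : 0 < √(5 : ℝ) := by positivity
  have hr2 : √(5 : ℝ) ^ 2 = 5 := Real.sq_sqrt (by norm_num)
  have hs : 0 < √(L * Δ) := by positivity
  have hs2 : √(L * Δ) ^ 2 = L * Δ := Real.sq_sqrt (by positivity)
  have ht : 0 < √T := by positivity
  have ht2 : √T ^ 2 = T := Real.sq_sqrt hT.le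
  have hinv : 1 / β ≤ 16 * ((M : ℝ) - 1) + σ * √T / (√5 * √(L * Δ)) := by
    have hb : 0 < σ * √T / (√5 * √(L * Δ)) := by positivity
    rcases min_choice (1 / (16 * ((M : ℝ) - 1))) (√5 * √(L * Δ) / (σ * √T)) with h | h
    · rw [hβ, h, one_div_one_div]
      linarith
    · rw [hβ, h, one_div_div]
      linarith
  have hle : β ≤ √5 * √(L * Δ) / (σ * √T) := hβ ▸ min_le_right _ _
  have hterm1 : 40 * L * Δ / (β * T) ≤
      640 * L * Δ * ((M : ℝ) - 1) / T + 8 * √5 * σ * √(L * Δ) / √T := by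
    have hk : 0 ≤ 40 * (L * Δ) / T := by positivity
    calc 40 * L * Δ / (β * T) = 40 * (L * Δ) / T * (1 / β) := by field_simp
      _ ≤ 40 * (L * Δ) / T * (16 * ((M : ℝ) - 1) + σ * √T / (√5 * √(L * Δ))) :=
        mul_le_mul_of_nonneg_left hinv hk
      _ = 640 * L * Δ * ((M : ℝ) - 1) / T
          + 40 * (L * Δ) / T * (σ * √T / (√5 * √(L * Δ))) := by ring
      _ = 640 * L * Δ * ((M : ℝ) - 1) / T + 8 * √5 * σ * √(L * Δ) / √T := by
        congr 1
        -- with `L * Δ` and `T` as squares of their roots, this is `40 / √5 = 8 * √5`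
        have key : ∀ r s t : ℝ, 0 < r → 0 < s → 0 < t → r ^ 2 = 5 →
            40 * s ^ 2 / t ^ 2 * (σ * t / (r * s)) = 8 * r * σ * s / t := by
          intro r s t h1 h2 h3 h4
          field_simp
          rw [h4]
          norm_num
        have := key _ _ _ hr hs ht hr2
        rwa [hs2, ht2] at this
  have hterm2 : 8 * β * σ ^ 2 ≤ 8 * √5 * σ * √(L * Δ) / √T := by
    have hk : 0 ≤ 8 * σ ^ 2 := by positivity
    calc 8 * β * σ ^ 2 = 8 * σ ^ 2 * β := by ring
      _ ≤ 8 * σ ^ 2 * (√5 * √(L * Δ) / (σ * √T)) := mul_le_mul_of_nonneg_left hle hk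
      _ = 8 * √5 * σ * √(L * Δ) / √T := by field_simp
  have hsum : 16 * √5 * σ * √(L * Δ) / √T =
      8 * √5 * σ * √(L * Δ) / √T + 8 * √5 * σ * √(L * Δ) / √T := by ring
  linarith
end
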